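/- arXiv:2303.17483 — 2 statements merged into one kernel-verified Lean document; each statement's English description precedes it below -/
import Mathlib

section
/- Let a > 0 and 0 < α < 1. The function u_p : [0,∞)×[0,∞) → ℝ defined by u_p(t,x) = ((1−α)²/(2(1+α)))^{1/(1−α)} · t^{2/(1−α)} is a nontrivial classical solution of the second mixed problem with Hölder nonlinearity: u_p is twice continuously differentiable on the closed quadrant [0,∞)×[0,∞), u_p ≥ 0, u_p is not identically zero, and it satisfies ∂²ₜu_p(t,x) − a²∂²ₓu_p(t,x) = (u_p(t,x))^α for all (t,x) ∈ [0,∞)×[0,∞), together with the zero initial conditions u_p(0,x) = 0, ∂ₜu_p(0,x) = 0 for all x ≥ 0 and the zero Neumann boundary condition ∂ₓu_p(t,0) = 0 for all t ≥ 0. -/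
open Set

/-- The particular self-similar solution
`u_p(t,x) = ((1−α)²/(2(1+α)))^{1/(1−α)} · t^{2/(1−α)}`. -/
noncomputable def uP (α : ℝ) : ℝ → ℝ → ℝ :=
  fun t _x => ((1 - α) ^ 2 / (2 * (1 + α))) ^ (1 / (1 - α)) * t ^ (2 / (1 - α))

/-!
The function does not depend on `x`, so the wave equation reduces to the ODE `u'' = u ^ α` in time.
For the ansatz `u = C * t ^ k` this asks that the exponents agree, `k - 2 = k * α`, and that the
coefficients agree, `C * (k * (k - 1)) = C ^ α`. The first condition gives `k = 2 / (1 - α)`, and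
then the second one gives `C ^ (1 - α) = 1 / (k * (k - 1)) = (1 - α) ^ 2 / (2 * (1 + α))`.
Since `2 ≤ k` for `0 ≤ α < 1`, the solution is `C²` up to `t = 0`.
-/

section PowerFunctions

variable {s : Set ℝ} {t c p : ℝ}

theorem derivWithin_const_mul_rpow_const (hs : UniqueDiffWithinAt ℝ s t) (hp : t ≠ 0 ∨ 1 ≤ p) :
    derivWithin (fun τ => c * τ ^ p) s t = c * p * t ^ (p - 1) := by
  rw [mul_assoc]
  exact ((Real.hasDerivAt_rpow_const hp).const_mul c).hasDerivWithinAt.derivWithin hs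

theorem derivWithin_derivWithin_const_mul_rpow_const (hs : UniqueDiffOn ℝ s) (hp : 2 ≤ p)
    (ht : t ∈ s) :
    derivWithin (derivWithin (fun τ => c * τ ^ p) s) s t = c * (p * (p - 1)) * t ^ (p - 2) := by
  have hfirst : EqOn (derivWithin (fun τ => c * τ ^ p) s) (fun τ => c * p * τ ^ (p - 1)) s :=
    fun τ hτ => derivWithin_const_mul_rpow_const (hs τ hτ) (.inr (by linarith))
  calc derivWithin (derivWithin (fun τ => c * τ ^ p) s) s t
      = derivWithin (fun τ => c * p * τ ^ (p - 1)) s t := derivWithin_congr hfirst (hfirst ht)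
    _ = c * p * (p - 1) * t ^ (p - 1 - 1) :=
        derivWithin_const_mul_rpow_const (hs t ht) (.inr (by linarith))
    _ = c * (p * (p - 1)) * t ^ (p - 2) := by ring_nf

theorem derivWithin_derivWithin_const_mul_rpow_const_eq_rpow {α : ℝ} (hs : UniqueDiffOn ℝ s)
    (ht : t ∈ s) (ht₀ : 0 ≤ t) (hc : 0 ≤ c) (hp : 2 ≤ p) (hexp : p * α = p - 2)
    (hcoeff : c * (p * (p - 1)) = c ^ α) :
    derivWithin (derivWithin (fun τ => c * τ ^ p) s) s t = (c * t ^ p) ^ α := by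
  rw [derivWithin_derivWithin_const_mul_rpow_const hs hp ht, hcoeff, ← hexp, Real.rpow_mul ht₀,
    Real.mul_rpow hc (Real.rpow_nonneg ht₀ p)]

theorem rpow_one_div_one_sub_mul_eq_rpow {b m α : ℝ} (hb : 0 < b) (hα : α ≠ 1) (hbm : b * m = 1) :
    b ^ (1 / (1 - α)) * m = (b ^ (1 / (1 - α))) ^ α := by
  have hα' : 1 - α ≠ 0 := sub_ne_zero.2 hα.symm
  have hexp : 1 / (1 - α) = 1 / (1 - α) * α + 1 := by field_simp; ring
  calc b ^ (1 / (1 - α)) * m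
      = b ^ (1 / (1 - α) * α) * b * m := by rw [← Real.rpow_add_one hb.ne', ← hexp]
    _ = (b ^ (1 / (1 - α))) ^ α := by rw [mul_assoc, hbm, mul_one, Real.rpow_mul hb.le]

end PowerFunctions

/-- The exponent `k` for which `t ^ (k - 2)` and `(t ^ k) ^ α` agree; the junk value at `α = 1`
is `0`. -/
noncomputable def uPExponent (α : ℝ) : ℝ :=
  2 / (1 - α)

/-- The coefficient `C` for which `C * t ^ uPExponent α` solves `u'' = u ^ α`. -/
noncomputable def uPCoeff (α : ℝ) : ℝ :=
  ((1 - α) ^ 2 / (2 * (1 + α))) ^ (1 / (1 - α))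

section ExponentAndCoefficient

variable {α : ℝ}

theorem uPExponent_mul_self (hα : α ≠ 1) : uPExponent α * α = uPExponent α - 2 := by
  have hα' : 1 - α ≠ 0 := sub_ne_zero.2 hα.symm
  rw [uPExponent]
  field_simp
  ring

theorem one_lt_uPExponent (hα : -1 < α) (hα' : α < 1) : 1 < uPExponent α := by
  rw [uPExponent, one_lt_div (sub_pos.2 hα')]
  linarith

theorem two_le_uPExponent (hα : 0 ≤ α) (hα' : α < 1) : 2 ≤ uPExponent α := by
  rw [uPExponent, le_div_iff₀ (sub_pos.2 hα')]
  linarith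

theorem uPCoeff_base_pos (hα : -1 < α) (hα' : α ≠ 1) : 0 < (1 - α) ^ 2 / (2 * (1 + α)) :=
  div_pos (sq_pos_of_ne_zero (sub_ne_zero.2 hα'.symm)) (by linarith)

theorem uPCoeff_pos (hα : -1 < α) (hα' : α ≠ 1) : 0 < uPCoeff α :=
  Real.rpow_pos_of_pos (uPCoeff_base_pos hα hα') _

theorem uPCoeff_mul_uPExponent (hα : -1 < α) (hα' : α ≠ 1) :
    uPCoeff α * (uPExponent α * (uPExponent α - 1)) = uPCoeff α ^ α := by
  have hsub : 1 - α ≠ 0 := sub_ne_zero.2 hα'.symm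
  have hadd : 1 + α ≠ 0 := by linarith
  refine rpow_one_div_one_sub_mul_eq_rpow (uPCoeff_base_pos hα hα') hα' ?_
  rw [uPExponent]
  field_simp
  ring

end ExponentAndCoefficient

section ParticularSolution

variable {α t x : ℝ} {s s' : Set ℝ}

theorem uP_eq_uPCoeff_mul_rpow (α t x : ℝ) : uP α t x = uPCoeff α * t ^ uPExponent α :=
  rfl

theorem contDiff_uP (hα : 0 ≤ α) (hα' : α < 1) :
    ContDiff ℝ 2 (fun q : ℝ × ℝ => uP α q.1 q.2) := by
  have hrpow : ContDiff ℝ 2 (fun τ : ℝ => τ ^ uPExponent α) :=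
    Real.contDiff_rpow_const_of_le (n := 2) (mod_cast two_le_uPExponent hα hα')
  exact contDiff_const.mul (hrpow.comp contDiff_fst)

theorem uP_nonneg (hα : -1 < α) (hα' : α ≠ 1) (ht : 0 ≤ t) : 0 ≤ uP α t x :=
  mul_nonneg (uPCoeff_pos hα hα').le (Real.rpow_nonneg ht _)

theorem uP_pos (hα : -1 < α) (hα' : α ≠ 1) (ht : 0 < t) : 0 < uP α t x :=
  mul_pos (uPCoeff_pos hα hα') (Real.rpow_pos_of_pos ht _)

theorem uP_zero_left (hα : α ≠ 1) : uP α 0 x = 0 := by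
  have hexp : uPExponent α ≠ 0 := div_ne_zero two_ne_zero (sub_ne_zero.2 hα.symm)
  rw [uP_eq_uPCoeff_mul_rpow, Real.zero_rpow hexp, mul_zero]

theorem derivWithin_uP_left_zero (hα : -1 < α) (hα' : α < 1) (hs : UniqueDiffWithinAt ℝ s 0) :
    derivWithin (fun τ => uP α τ x) s 0 = 0 := by
  have hexp : 1 < uPExponent α := one_lt_uPExponent hα hα'
  simp only [uP_eq_uPCoeff_mul_rpow]
  rw [derivWithin_const_mul_rpow_const hs (.inr hexp.le), Real.zero_rpow (sub_pos.2 hexp).ne',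
    mul_zero]

theorem derivWithin_uP_right : derivWithin (fun ξ => uP α t ξ) s x = 0 := by
  simp only [uP_eq_uPCoeff_mul_rpow, derivWithin_fun_const, Pi.zero_apply]

theorem derivWithin_derivWithin_uP_left (hα : 0 ≤ α) (hα' : α < 1) (hs : UniqueDiffOn ℝ s)
    (ht : t ∈ s) (ht₀ : 0 ≤ t) :
    derivWithin (derivWithin (fun τ => uP α τ x) s) s t = uP α t x ^ α :=
  have hα₁ : -1 < α := by linarith
  derivWithin_derivWithin_const_mul_rpow_const_eq_rpow hs ht ht₀ (uPCoeff_pos hα₁ hα'.ne).le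
    (two_le_uPExponent hα hα') (uPExponent_mul_self hα'.ne) (uPCoeff_mul_uPExponent hα₁ hα'.ne)

theorem uP_wave_equation (a : ℝ) (hα : 0 ≤ α) (hα' : α < 1) (hs : UniqueDiffOn ℝ s) (ht : t ∈ s)
    (ht₀ : 0 ≤ t) :
    derivWithin (fun τ => derivWithin (fun σ => uP α σ x) s τ) s t
      - a ^ 2 * derivWithin (fun ξ => derivWithin (fun η => uP α t η) s' ξ) s' x
      = uP α t x ^ α := by
  simp only [derivWithin_uP_right, derivWithin_fun_const, Pi.zero_apply, mul_zero, sub_zero]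
  exact derivWithin_derivWithin_uP_left hα hα' hs ht ht₀

end ParticularSolution

/-- **A nontrivial classical solution of the second mixed problem with Hölder
nonlinearity.** For `a > 0` and `0 < α < 1`, the function
`u_p(t,x) = ((1−α)²/(2(1+α)))^{1/(1−α)} · t^{2/(1−α)}` is of class `C²` on the closed
quadrant `[0,∞) × [0,∞)` (one-sided derivatives at the boundary, i.e. derivatives
within the quadrant), is nonnegative, is not identically zero, satisfies
`∂ₜ²u_p − a²∂ₓ²u_p = u_pᵅ` everywhere on the quadrant, the zero initial conditions
`u_p(0,x) = 0`, `∂ₜu_p(0,x) = 0`, and the zero Neumann boundary condition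
`∂ₓu_p(t,0) = 0`.  Here `z ^ α` denotes the real power (rpow). -/
theorem uP_is_nontrivial_classical_solution
    (a α : ℝ) (ha : 0 < a) (hα1 : 0 < α) (hα2 : α < 1) :
    ContDiffOn ℝ 2 (fun p : ℝ × ℝ => uP α p.1 p.2) (Ici 0 ×ˢ Ici 0) ∧
    (∀ t ∈ Ici (0:ℝ), ∀ x ∈ Ici (0:ℝ), 0 ≤ uP α t x) ∧
    ¬ (∀ t ∈ Ici (0:ℝ), ∀ x ∈ Ici (0:ℝ), uP α t x = 0) ∧
    (∀ t ∈ Ici (0:ℝ), ∀ x ∈ Ici (0:ℝ),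
      derivWithin (fun τ => derivWithin (fun σ => uP α σ x) (Ici 0) τ) (Ici 0) t
        - a ^ 2 * derivWithin (fun ξ => derivWithin (fun η => uP α t η) (Ici 0) ξ) (Ici 0) x
        = (uP α t x) ^ α) ∧
    (∀ x ∈ Ici (0:ℝ), uP α 0 x = 0) ∧
    (∀ x ∈ Ici (0:ℝ), derivWithin (fun τ => uP α τ x) (Ici 0) 0 = 0) ∧
    (∀ t ∈ Ici (0:ℝ), derivWithin (fun ξ => uP α t ξ) (Ici 0) 0 = 0) := by
  have hα : -1 < α := by linarith
  have hunique : UniqueDiffOn ℝ (Ici (0 : ℝ)) := uniqueDiffOn_Ici 0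
  refine ⟨(contDiff_uP hα1.le hα2).contDiffOn, fun t ht x _ => uP_nonneg hα hα2.ne ht, ?_,
    fun t ht x _ => uP_wave_equation a hα1.le hα2 hunique ht ht,
    fun x _ => uP_zero_left hα2.ne,
    fun x _ => derivWithin_uP_left_zero hα hα2 (hunique 0 self_mem_Ici),
    fun t _ => derivWithin_uP_right⟩
  intro hzero
  exact (uP_pos hα hα2.ne one_pos).ne' (hzero 1 (mem_Ici.2 zero_le_one) 0 self_mem_Ici)
end

section
/- Let a > 0, 0 < α < 1, and let u_p(t,x) = ((1−α)²/(2(1+α)))^{1/(1−α)} · t^{2/(1−α)}. For every s > 0, the 'glued' function u_{p;s} : [0,∞)×[0,∞) → ℝ defined by u_{p;s}(t,x) = 0 for 0 ≤ t < s and u_{p;s}(t,x) = u_p(t−s, x) for t ≥ s is twice continuously differentiable on the closed quadrant [0,∞)×[0,∞) and is a classical solution of the problem: ∂²ₜu_{p;s}(t,x) − a²∂²ₓu_{p;s}(t,x) = (u_{p;s}(t,x))^α for all (t,x) ∈ [0,∞)×[0,∞), u_{p;s}(0,x) = 0 and ∂ₜu_{p;s}(0,x) = 0 for all x ≥ 0,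 and ∂ₓu_{p;s}(t,0) = 0 for all t ≥ 0. -/
open Set

/-- The `glued` solution with parameter `s`: zero for `t < s` and the shifted
self-similar solution `u_p(t − s, x)` for `t ≥ s`. -/
noncomputable def uPGlued (α s : ℝ) : ℝ → ℝ → ℝ :=
  fun t x => if t < s then 0 else uP α (t - s) x

/-!
Since `u_{p;s}` does not depend on `x`, the wave equation reduces to the ordinary differential
equation `w'' = w ^ α` for a profile `w = C (r⁺) ^ p` evaluated at `r = t - s`. Taking the positive
part absorbs the gluing: `(r⁺) ^ p` is of class `Cⁿ` on all of `ℝ` as soon as `n < p`. Matching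
exponents forces `p - 2 = p α`, and matching coefficients forces `C p (p - 1) = C ^ α`.
-/

theorem continuous_posPart_rpow {p : ℝ} (hp : 0 ≤ p) : Continuous fun r : ℝ => r⁺ ^ p :=
  continuous_posPart.rpow_const fun _ => Or.inr hp

theorem hasDerivAt_posPart_rpow {p : ℝ} (hp : 1 < p) (r : ℝ) :
    HasDerivAt (fun x : ℝ => x⁺ ^ p) (p * r⁺ ^ (p - 1)) r := by
  -- Away from the corner the formula is elementary, and it extends there by continuity.
  have hasDerivAt_of_ne_zero (x : ℝ) (hx : x ≠ 0) :
      HasDerivAt (fun y : ℝ => y⁺ ^ p) (p * x⁺ ^ (p - 1)) x := by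
    rcases hx.lt_or_gt with hneg | hpos
    · rw [posPart_eq_zero.2 hneg.le, Real.zero_rpow (by linarith), mul_zero]
      refine (hasDerivAt_const x 0).congr_of_eventuallyEq ?_
      filter_upwards [Iio_mem_nhds hneg] with y hy
      rw [posPart_eq_zero.2 (mem_Iio.1 hy).le, Real.zero_rpow (by linarith)]
    · rw [posPart_eq_self.2 hpos.le]
      refine (Real.hasDerivAt_rpow_const (Or.inl hx)).congr_of_eventuallyEq ?_
      filter_upwards [Ioi_mem_nhds hpos] with y hy
      rw [posPart_eq_self.2 (mem_Ioi.1 hy).le]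
  exact hasDerivAt_of_hasDerivAt_of_ne' hasDerivAt_of_ne_zero
    (continuous_posPart_rpow (by linarith)).continuousAt
    ((continuous_posPart_rpow (by linarith)).const_mul p).continuousAt r

theorem contDiff_posPart_rpow {n : ℕ} {p : ℝ} (hp : n < p) :
    ContDiff ℝ n fun r : ℝ => r⁺ ^ p := by
  induction n generalizing p with
  | zero => exact contDiff_zero.2 (continuous_posPart_rpow (by simpa using hp.le))
  | succ n ih =>
    push_cast at hp ⊢
    have hp1 : 1 < p := by linarith [n.cast_nonneg (α := ℝ)]
    refine contDiff_succ_iff_deriv.2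
      ⟨fun r => (hasDerivAt_posPart_rpow hp1 r).differentiableAt, by simp, ?_⟩
    rw [funext fun r => (hasDerivAt_posPart_rpow hp1 r).deriv]
    exact contDiff_const.mul (ih (by linarith))

theorem derivWithin_derivWithin_eq_deriv_deriv {𝕜 F : Type*} [NontriviallyNormedField 𝕜]
    [NormedAddCommGroup F] [NormedSpace 𝕜 F] {f : 𝕜 → F} {S : Set 𝕜} {t : 𝕜}
    (hf : ∀ τ ∈ S, DifferentiableAt 𝕜 f τ) (hf' : DifferentiableAt 𝕜 (deriv f) t)
    (hS : UniqueDiffOn 𝕜 S) (ht : t ∈ S) :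
    derivWithin (fun τ => derivWithin f S τ) S t = deriv (deriv f) t := by
  have derivWithin_eq (τ : 𝕜) (hτ : τ ∈ S) : derivWithin f S τ = deriv f τ :=
    (hf τ hτ).derivWithin (hS τ hτ)
  rw [derivWithin_congr derivWithin_eq (derivWithin_eq t ht), hf'.derivWithin (hS t ht)]

theorem rpow_one_div_one_sub_eq_mul_rpow {K α : ℝ} (hK : 0 < K) (hα : α ≠ 1) :
    K ^ (1 / (1 - α)) = K * (K ^ (1 / (1 - α))) ^ α := by
  have : 1 - α ≠ 0 := sub_ne_zero.2 hα.symm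
  calc
    K ^ (1 / (1 - α)) = K ^ (1 + 1 / (1 - α) * α) := by congr 1; field_simp; ring
    _ = K * (K ^ (1 / (1 - α))) ^ α := by
      rw [Real.rpow_add hK, Real.rpow_one, Real.rpow_mul hK.le]

/-- The profile `w(r) = C (r⁺) ^ p` of the glued solution, as a function of the time `r = t - s`
elapsed since the gluing; the positive part encodes the rest state `w = 0` for `r ≤ 0`. -/
noncomputable def uPProfile (α r : ℝ) : ℝ :=
  uPCoeff α * r⁺ ^ uPExponent α

section Profile

variable {α : ℝ}

theorem uPExponent_pos (hα : α < 1) : 0 < uPExponent α :=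
  div_pos two_pos (sub_pos.2 hα)

theorem one_lt_uPExponent_s5 (hα₁ : -1 < α) (hα₂ : α < 1) : 1 < uPExponent α := by
  rw [uPExponent, one_lt_div (sub_pos.2 hα₂)]
  linarith

theorem two_lt_uPExponent (hα₁ : 0 < α) (hα₂ : α < 1) : 2 < uPExponent α := by
  rw [uPExponent, lt_div_iff₀ (sub_pos.2 hα₂)]
  linarith

theorem uPExponent_sub_two (hα : α ≠ 1) : uPExponent α - 2 = uPExponent α * α := by
  have : 1 - α ≠ 0 := sub_ne_zero.2 hα.symm
  rw [uPExponent]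
  field_simp
  ring

theorem uPCoeff_nonneg (hα : -1 < α) : 0 ≤ uPCoeff α :=
  Real.rpow_nonneg (div_nonneg (sq_nonneg _) (by linarith)) _

theorem uPCoeff_mul_uPExponent_mul_sub_one (hα₁ : -1 < α) (hα₂ : α ≠ 1) :
    uPCoeff α * (uPExponent α * (uPExponent α - 1)) = uPCoeff α ^ α := by
  have h_sub : 1 - α ≠ 0 := sub_ne_zero.2 hα₂.symm
  have h_add : 0 < 1 + α := by linarith
  set K := (1 - α) ^ 2 / (2 * (1 + α)) with hK
  have hK_pos : 0 < K := by positivity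
  have hK_inv : K * (uPExponent α * (uPExponent α - 1)) = 1 := by
    rw [hK, uPExponent]
    field_simp
    ring
  have hC : uPCoeff α = K * uPCoeff α ^ α := rpow_one_div_one_sub_eq_mul_rpow hK_pos hα₂
  calc
    uPCoeff α * (uPExponent α * (uPExponent α - 1))
        = K * uPCoeff α ^ α * (uPExponent α * (uPExponent α - 1)) := by rw [← hC]
    _ = K * (uPExponent α * (uPExponent α - 1)) * uPCoeff α ^ α := by ring
    _ = uPCoeff α ^ α := by rw [hK_inv, one_mul]

theorem uPProfile_of_nonpos (hα : α < 1) {r : ℝ} (hr : r ≤ 0) : uPProfile α r = 0 := by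
  rw [uPProfile, posPart_eq_zero.2 hr, Real.zero_rpow (uPExponent_pos hα).ne', mul_zero]

theorem contDiff_uPProfile {n : ℕ} (hn : n < uPExponent α) : ContDiff ℝ n (uPProfile α) :=
  contDiff_const.mul (contDiff_posPart_rpow hn)

theorem deriv_uPProfile (hα₁ : -1 < α) (hα₂ : α < 1) :
    deriv (uPProfile α) =
      fun r => uPCoeff α * (uPExponent α * r⁺ ^ (uPExponent α - 1)) :=
  funext fun r =>
    ((hasDerivAt_posPart_rpow (one_lt_uPExponent_s5 hα₁ hα₂) r).const_mul (uPCoeff α)).deriv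

theorem deriv_uPProfile_of_nonpos (hα₁ : -1 < α) (hα₂ : α < 1) {r : ℝ} (hr : r ≤ 0) :
    deriv (uPProfile α) r = 0 := by
  have hp : uPExponent α - 1 ≠ 0 := (sub_pos.2 (one_lt_uPExponent_s5 hα₁ hα₂)).ne'
  simp [deriv_uPProfile hα₁ hα₂, posPart_eq_zero.2 hr, Real.zero_rpow hp]

theorem deriv_deriv_uPProfile (hα₁ : 0 < α) (hα₂ : α < 1) (r : ℝ) :
    deriv (deriv (uPProfile α)) r = uPProfile α r ^ α := by
  have hp : 1 < uPExponent α - 1 := by linarith [two_lt_uPExponent hα₁ hα₂]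
  have hα : -1 < α := by linarith
  calc
    deriv (deriv (uPProfile α)) r
        = uPCoeff α *
            (uPExponent α * ((uPExponent α - 1) * r⁺ ^ (uPExponent α - 1 - 1))) := by
      rw [deriv_uPProfile hα hα₂]
      exact (((hasDerivAt_posPart_rpow hp r).const_mul _).const_mul _).deriv
    _ = uPCoeff α * (uPExponent α * (uPExponent α - 1)) * r⁺ ^ (uPExponent α - 2) := by
      ring_nf
    _ = uPCoeff α ^ α * r⁺ ^ (uPExponent α * α) := by
      rw [uPCoeff_mul_uPExponent_mul_sub_one hα hα₂.ne, uPExponent_sub_two hα₂.ne]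
    _ = uPProfile α r ^ α := by
      rw [uPProfile, Real.mul_rpow (uPCoeff_nonneg hα) (Real.rpow_nonneg (posPart_nonneg r) _),
        Real.rpow_mul (posPart_nonneg r)]

theorem uPGlued_eq_uPProfile (hα : α < 1) (s t x : ℝ) :
    uPGlued α s t x = uPProfile α (t - s) := by
  rw [uPGlued]
  split_ifs with h
  · rw [uPProfile_of_nonpos hα (sub_neg.2 h).le]
  · rw [uP, uPProfile, posPart_eq_self.2 (sub_nonneg.2 (not_lt.1 h)), uPCoeff, uPExponent]

end Profile

/-- **The glued functions are classical solutions.** For `a > 0`, `0 < α < 1` and any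
`s > 0`, the glued function `u_{p;s}`, equal to `0` for `0 ≤ t < s` and to
`u_p(t−s,x) = ((1−α)²/(2(1+α)))^{1/(1−α)}·(t−s)^{2/(1−α)}` for `t ≥ s`, is of class
`C²` on the closed quadrant `[0,∞) × [0,∞)` (one-sided derivatives at the boundary,
i.e. derivatives within the quadrant) and is a classical solution of the second mixed
problem: `∂ₜ²u_{p;s} − a²∂ₓ²u_{p;s} = u_{p;s}ᵅ` on the quadrant, with zero initial
conditions and zero Neumann boundary condition.  Here `z ^ α` denotes the real power
(rpow). -/
theorem uPGlued_is_classical_solution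
    (a α : ℝ) (ha : 0 < a) (hα1 : 0 < α) (hα2 : α < 1)
    (s : ℝ) (hs : 0 < s) :
    ContDiffOn ℝ 2 (fun p : ℝ × ℝ => uPGlued α s p.1 p.2) (Ici 0 ×ˢ Ici 0) ∧
    (∀ t ∈ Ici (0:ℝ), ∀ x ∈ Ici (0:ℝ),
      derivWithin (fun τ => derivWithin (fun σ => uPGlued α s σ x) (Ici 0) τ) (Ici 0) t
        - a ^ 2 *
          derivWithin (fun ξ => derivWithin (fun η => uPGlued α s t η) (Ici 0) ξ) (Ici 0) x
        = (uPGlued α s t x) ^ α) ∧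
    (∀ x ∈ Ici (0:ℝ), uPGlued α s 0 x = 0) ∧
    (∀ x ∈ Ici (0:ℝ), derivWithin (fun τ => uPGlued α s τ x) (Ici 0) 0 = 0) ∧
    (∀ t ∈ Ici (0:ℝ), derivWithin (fun ξ => uPGlued α s t ξ) (Ici 0) 0 = 0) := by
  have hα : -1 < α := by linarith
  have hw : ContDiff ℝ 2 (uPProfile α) :=
    contDiff_uPProfile (n := 2) (mod_cast two_lt_uPExponent hα1 hα2)
  have hshift : ContDiff ℝ 2 fun t => uPProfile α (t - s) :=
    hw.comp (contDiff_id.sub contDiff_const)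
  have deriv_shift : deriv (fun t => uPProfile α (t - s)) = fun t => deriv (uPProfile α) (t - s) :=
    funext fun t => deriv_comp_sub_const (f := uPProfile α) s t
  simp only [uPGlued_eq_uPProfile hα2]
  refine ⟨(hshift.comp contDiff_fst).contDiffOn, fun t ht x _ => ?equation,
    fun x _ => uPProfile_of_nonpos hα2 (by linarith), fun x _ => ?velocity, fun t _ => by simp⟩
  case equation =>
    rw [derivWithin_derivWithin_eq_deriv_deriv (fun τ _ => hshift.differentiable two_ne_zero τ)
      (hshift.differentiable_deriv_two t) (uniqueDiffOn_Ici 0) ht, deriv_shift,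
      deriv_comp_sub_const (f := deriv (uPProfile α)), deriv_deriv_uPProfile hα1 hα2]
    simp
  case velocity =>
    rw [(hshift.differentiable two_ne_zero 0).derivWithin (uniqueDiffOn_Ici 0 0 self_mem_Ici),
      deriv_shift]
    exact deriv_uPProfile_of_nonpos hα hα2 (by linarith)
end
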